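/- For every real parameter a > 1/2, the functions g(s) := A(s)·cosh(φ(s)) and ĝ(s) := A(s)·sinh(φ(s)) both satisfy the mode-zero Jacobi equation f''(s) + (B'(s)/B(s))·f'(s) − 2·f(s) = 0 for all s ∈ ℝ. -/

import Mathlib

namespace MoriCatenoid

/-- Profile function `B(s) = √(a·cosh(2s) − 1/2)` of the Mori family. -/
noncomputable def B (a s : ℝ) : ℝ := Real.sqrt (a * Real.cosh (2 * s) - 1 / 2)

/-- Profile function `A(s) = √(a·cosh(2s) + 1/2)` of the Mori family. -/
noncomputable def A (a s : ℝ) : ℝ := Real.sqrt (a * Real.cosh (2 * s) + 1 / 2)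

/-- The constant `K = √(a² − 1/4)`. -/
noncomputable def K (a : ℝ) : ℝ := Real.sqrt (a ^ 2 - 1 / 4)

/-- The angle function `φ(s) = K·∫₀ˢ dt/(A(t)²·B(t))`. -/
noncomputable def φ (a s : ℝ) : ℝ := K a * ∫ t in (0:ℝ)..s, 1 / ((A a t) ^ 2 * B a t)

/-- The mode-one Jacobi field `f_*(s) = d/ds (A(s)·cosh(φ(s)))`. -/
noncomputable def fstar (a s : ℝ) : ℝ := deriv (fun t => A a t * Real.cosh (φ a t)) s

/-- Squared norm of the second fundamental form, `|II|²(s) = 2·(B''(s)/B(s) − 1)`. -/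
noncomputable def IIsq (a s : ℝ) : ℝ := 2 * (deriv (deriv (B a)) s / B a s - 1)

/-- The mode-`k` potential `W_k(s) = |II|²(s) − 2 − k²/B(s)²`. -/
noncomputable def W (a : ℝ) (k : ℤ) (s : ℝ) : ℝ := IIsq a s - 2 - (k : ℝ) ^ 2 / (B a s) ^ 2

/-- Inverse hyperbolic cosine: `arcosh x = log (x + √(x² − 1))`. -/
noncomputable def arcosh (x : ℝ) : ℝ := Real.log (x + Real.sqrt (x ^ 2 - 1))

/-- The axial boost field `u_*(s) = −a·sinh(2s)/B(s)`. -/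
noncomputable def ustar (a s : ℝ) : ℝ := -a * Real.sinh (2 * s) / B a s

/-- The radial quadratic form of mode `k`:
`S_k(u) = ∫_{−s₀}^{s₀} (B·u'² − B·W_k·u²) − coth(r)·B(s₀)·(u(s₀)² + u(−s₀)²)`,
where `u'` is the derivative of `u` within `[−s₀, s₀]`. -/
noncomputable def Sk (a s₀ r : ℝ) (k : ℤ) (u : ℝ → ℝ) : ℝ :=
  (∫ s in (-s₀)..s₀,
      (B a s * (derivWithin u (Set.Icc (-s₀) s₀) s) ^ 2 - B a s * W a k s * u s ^ 2))
    - Real.cosh r / Real.sinh r * B a s₀ * (u s₀ ^ 2 + u (-s₀) ^ 2)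

lemma C_ge (a : ℝ) (ha : 1 / 2 < a) (s : ℝ) : 1 / 2 < a * Real.cosh (2 * s) := by
  nlinarith [Real.one_le_cosh (2 * s)]

lemma hasDerivAt_C (a s : ℝ) :
    HasDerivAt (fun t => a * Real.cosh (2 * t)) (2 * (a * Real.sinh (2 * s))) s := by
  have h := (((hasDerivAt_id s).const_mul 2).cosh).const_mul a
  refine h.congr_deriv ?_
  simp only [id]
  ring

lemma hasDerivAt_S (a s : ℝ) :
    HasDerivAt (fun t => a * Real.sinh (2 * t)) (2 * (a * Real.cosh (2 * s))) s := by
  have h := (((hasDerivAt_id s).const_mul 2).sinh).const_mul a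
  refine h.congr_deriv ?_
  simp only [id]
  ring

lemma A_pos (a : ℝ) (ha : 1 / 2 < a) (s : ℝ) : 0 < A a s :=
  Real.sqrt_pos.2 (by linarith [C_ge a ha s])

lemma B_pos (a : ℝ) (ha : 1 / 2 < a) (s : ℝ) : 0 < B a s :=
  Real.sqrt_pos.2 (by linarith [C_ge a ha s])

lemma A_sq (a : ℝ) (ha : 1 / 2 < a) (s : ℝ) : A a s ^ 2 = a * Real.cosh (2 * s) + 1 / 2 :=
  Real.sq_sqrt (by linarith [C_ge a ha s])

lemma B_sq (a : ℝ) (ha : 1 / 2 < a) (s : ℝ) : B a s ^ 2 = a * Real.cosh (2 * s) - 1 / 2 :=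
  Real.sq_sqrt (by linarith [C_ge a ha s])

lemma hasDerivAt_A (a : ℝ) (ha : 1 / 2 < a) (s : ℝ) :
    HasDerivAt (A a) (a * Real.sinh (2 * s) / A a s) s := by
  have h := ((hasDerivAt_C a s).add_const (1 / 2)).sqrt (by linarith [C_ge a ha s])
  refine h.congr_deriv ?_
  rw [mul_div_mul_left _ _ two_ne_zero]
  rfl

lemma hasDerivAt_B (a : ℝ) (ha : 1 / 2 < a) (s : ℝ) :
    HasDerivAt (B a) (a * Real.sinh (2 * s) / B a s) s := by
  have h := ((hasDerivAt_C a s).sub_const (1 / 2)).sqrt (by linarith [C_ge a ha s])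
  refine h.congr_deriv ?_
  rw [mul_div_mul_left _ _ two_ne_zero]
  rfl

lemma hasDerivAt_φ (a : ℝ) (ha : 1 / 2 < a) (s : ℝ) :
    HasDerivAt (φ a) (K a / (A a s ^ 2 * B a s)) s := by
  have hA : Continuous (A a) :=
    continuous_iff_continuousAt.2 fun t => (hasDerivAt_A a ha t).continuousAt
  have hB : Continuous (B a) :=
    continuous_iff_continuousAt.2 fun t => (hasDerivAt_B a ha t).continuousAt
  have hc : Continuous fun t => 1 / ((A a t) ^ 2 * B a t) :=
    continuous_const.div ((hA.pow 2).mul hB) fun t =>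
      (mul_pos (pow_pos (A_pos a ha t) 2) (B_pos a ha t)).ne'
  have h := (hc.integral_hasStrictDerivAt 0 s).hasDerivAt.const_mul (K a)
  rw [mul_one_div] at h
  exact h

/-- Common computation for `c = cosh ∘ φ` and `c = sinh ∘ φ`. -/
lemma jacobi_aux (a : ℝ) (ha : 1 / 2 < a) (c h : ℝ → ℝ)
    (hc : ∀ s, HasDerivAt c (h s * (K a / (A a s ^ 2 * B a s))) s)
    (hh : ∀ s, HasDerivAt h (c s * (K a / (A a s ^ 2 * B a s))) s) (s : ℝ) :
    deriv (deriv (fun t => A a t * c t)) s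
      + deriv (B a) s / B a s * deriv (fun t => A a t * c t) s
      - 2 * (A a s * c s) = 0 := by
  have h1 : deriv (fun t => A a t * c t) =
      fun t => a * Real.sinh (2 * t) / A a t * c t + K a / (A a t * B a t) * h t := by
    funext t
    have hA := (A_pos a ha t).ne'
    have hB := (B_pos a ha t).ne'
    rw [((hasDerivAt_A a ha t).fun_mul (hc t)).deriv]
    field_simp
  have hA := (A_pos a ha s).ne'
  have hB := (B_pos a ha s).ne'
  have h2 := (((hasDerivAt_S a s).fun_div (hasDerivAt_A a ha s) hA).fun_mul (hc s)).fun_add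
    (((hasDerivAt_const s (K a)).fun_div
      ((hasDerivAt_A a ha s).fun_mul (hasDerivAt_B a ha s)) (mul_ne_zero hA hB)).fun_mul (hh s))
  rw [h1, h2.deriv, (hasDerivAt_B a ha s).deriv]
  beta_reduce
  clear h1 h2 hc hh
  have eA := A_sq a ha s
  have eB := B_sq a ha s
  have eK : K a ^ 2 = a ^ 2 - 1 / 4 := Real.sq_sqrt (by nlinarith)
  have eS : (a * Real.sinh (2 * s)) ^ 2 = (a * Real.cosh (2 * s)) ^ 2 - a ^ 2 := by
    rw [mul_pow, mul_pow, Real.cosh_sq]; ring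
  generalize a * Real.sinh (2 * s) = S at *
  generalize a * Real.cosh (2 * s) = C at *
  generalize A a s = α at *
  generalize B a s = β at *
  generalize K a = k at *
  have key : 2 * C * α ^ 2 * β ^ 2 - S ^ 2 * β ^ 2 + k ^ 2 + S ^ 2 * α ^ 2
      - 2 * α ^ 4 * β ^ 2 = 0 := by
    rw [show α ^ 4 = (α ^ 2) ^ 2 by ring, eA, eB, eK, eS]; ring
  have : ∀ x : ℝ, x = (2 * C * α ^ 2 * β ^ 2 - S ^ 2 * β ^ 2 + k ^ 2 + S ^ 2 * α ^ 2
      - 2 * α ^ 4 * β ^ 2) * (c s / (α ^ 3 * β ^ 2)) → x = 0 := by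
    intro x hx
    rw [hx, key, zero_mul]
  apply this
  field_simp
  ring

/-- The functions `g = A·cosh φ` and `ĝ = A·sinh φ` both satisfy the mode-zero
Jacobi equation `f'' + (B'/B)·f' − 2·f = 0` on all of `ℝ`. -/
theorem mode_zero_jacobi_equation (a : ℝ) (ha : 1 / 2 < a) (s : ℝ) :
    (deriv (deriv (fun t => A a t * Real.cosh (φ a t))) s
        + deriv (B a) s / B a s * deriv (fun t => A a t * Real.cosh (φ a t)) s
        - 2 * (A a s * Real.cosh (φ a s)) = 0) ∧
    (deriv (deriv (fun t => A a t * Real.sinh (φ a t))) s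
        + deriv (B a) s / B a s * deriv (fun t => A a t * Real.sinh (φ a t)) s
        - 2 * (A a s * Real.sinh (φ a s)) = 0) := by
  exact ⟨jacobi_aux a ha (fun t => Real.cosh (φ a t)) (fun t => Real.sinh (φ a t))
      (fun t => (hasDerivAt_φ a ha t).cosh) (fun t => (hasDerivAt_φ a ha t).sinh) s,
    jacobi_aux a ha (fun t => Real.sinh (φ a t)) (fun t => Real.cosh (φ a t))
      (fun t => (hasDerivAt_φ a ha t).sinh) (fun t => (hasDerivAt_φ a ha t).cosh) s⟩

end MoriCatenoid
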